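/- Let R be the quotient of ℂ⟨e1,e2,e3⟩ by the two-sided ideal generated by e1e2 + e2e1 − e3, e1e3 + e3e1, and e2e3 + e3e2 (the universal enveloping algebra of the color analogue of the Heisenberg Lie algebra). Then h_0 = 1, h_1 = 2, h_2 = 2, h_3 = 1, and h_n = 0 for all n ≥ 4. -/

import Mathlib

open CategoryTheory FreeAlgebra

/-- `Ext^m_R(ℂ,ℂ)` as a ℂ-module, where `ℂ` is an `R`-module via the augmentation `ε`. -/
noncomputable def extC (R : Type) [Ring R] [Algebra ℂ R] (ε : R →ₐ[ℂ] ℂ) (m : ℕ) :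
    ModuleCat ℂ :=
  letI : Module R ℂ := Module.compHom ℂ ε.toRingHom
  ((Ext ℂ (ModuleCat R) m).obj (Opposite.op (ModuleCat.of R ℂ))).obj (ModuleCat.of R ℂ)

/-- `h_m = dim_ℂ Ext^m_R(ℂ,ℂ)`. -/
noncomputable def extDim (R : Type) [Ring R] [Algebra ℂ R] (ε : R →ₐ[ℂ] ℂ) (m : ℕ) : ℕ :=
  Module.finrank ℂ (extC R ε m)

/-- Relations of the color Heisenberg algebra: `e1e2 + e2e1 = e3`, `e1e3 + e3e1 = 0`, `e2e3 + e3e2 = 0`. -/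
inductive CRel : FreeAlgebra ℂ (Fin 3) → FreeAlgebra ℂ (Fin 3) → Prop
  | r12 : CRel (ι ℂ 0 * ι ℂ 1 + ι ℂ 1 * ι ℂ 0) (ι ℂ 2)
  | r13 : CRel (ι ℂ 0 * ι ℂ 2 + ι ℂ 2 * ι ℂ 0) 0
  | r23 : CRel (ι ℂ 1 * ι ℂ 2 + ι ℂ 2 * ι ℂ 1) 0

/-!
Over `R` the trivial module has the minimal free resolution `0 → R → R² → R² → R → ℂ → 0`:
eliminating `z = xy + yx` leaves two generators, the two cubic relations `xz + zx = 0` and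
`yz + zy = 0`, and one syzygy `(y, x)` between the relations. Every matrix entry lies in the
augmentation ideal, so the differentials of `Hom(-, ℂ)` vanish and the dimensions of `Ext` are the
ranks.

Exactness at the generators is Fox calculus: modulo the relations, the partial derivatives of an
element are well defined. Exactness further left is divisibility by `x`, which is read off from
the PBW basis `zᵏ yʲ xⁱ`, whose linear independence comes from an action on polynomials by sign
changes, multiplications and one partial derivative.
-/

universe u

/-- A resolution `⋯ → R^{b₁} → R^{b₀} → M → 0` of a left module over a possibly noncommutative
ring by free modules `Fin bₙ → R` of finite rank. -/
structure FreeResolution (R M : Type u) [Ring R] [AddCommGroup M] [Module R M] where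
  rank : ℕ → ℕ
  d (n : ℕ) : (Fin (rank (n + 1)) → R) →ₗ[R] (Fin (rank n) → R)
  π : (Fin (rank 0) → R) →ₗ[R] M
  exact (n : ℕ) : Function.Exact (d (n + 1)) (d n)
  exact_π : Function.Exact (d 0) π
  surjective_π : Function.Surjective π

namespace FreeResolution

section ProjectiveResolution

variable {R M : Type u} [Ring R] [AddCommGroup M] [Module R M] (F : FreeResolution R M)

/-- The free modules of the resolution, as a chain complex. -/
noncomputable def complex : ChainComplex (ModuleCat.{u} R) ℕ :=
  ChainComplex.of (fun n => ModuleCat.of R (Fin (F.rank n) → R)) (fun n => ModuleCat.ofHom (F.d n))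
    fun n => ModuleCat.hom_ext (F.exact n).linearMap_comp_eq_zero

lemma complex_d (n : ℕ) : F.complex.d (n + 1) n = ModuleCat.ofHom (F.d n) :=
  ChainComplex.of_d (fun n => ModuleCat.of R (Fin (F.rank n) → R))
    (fun n => ModuleCat.ofHom (F.d n)) n

lemma complex_exactAt_succ (n : ℕ) : F.complex.ExactAt (n + 1) := by
  rw [HomologicalComplex.exactAt_iff' _ (n + 1 + 1) (n + 1) n (by simp) (by simp),
    ShortComplex.ShortExact.moduleCat_exact_iff_function_exact]
  change Function.Exact (F.complex.d (n + 1 + 1) (n + 1)) (F.complex.d (n + 1) n)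
  rw [complex_d, complex_d]
  exact F.exact n

/-- The augmentation `π` as a chain map onto `M` placed in degree `0`. -/
noncomputable def augmentation :
    F.complex ⟶ (ChainComplex.single₀ (ModuleCat.{u} R)).obj (ModuleCat.of R M) :=
  (ChainComplex.toSingle₀Equiv _ _).symm ⟨ModuleCat.ofHom F.π, by
    rw [complex_d]
    exact ModuleCat.hom_ext F.exact_π.linearMap_comp_eq_zero⟩

lemma quasiIsoAt_zero_augmentation : QuasiIsoAt F.augmentation 0 := by
  rw [ChainComplex.quasiIsoAt₀_iff, ShortComplex.quasiIso_iff_of_zeros' _ rfl rfl rfl]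
  constructor
  · rw [ShortComplex.ShortExact.moduleCat_exact_iff_function_exact]
    change Function.Exact (F.complex.d 1 0) F.π
    rw [complex_d]
    exact F.exact_π
  · exact (ModuleCat.epi_iff_surjective (ModuleCat.ofHom F.π)).2 F.surjective_π

/-- A free resolution gives a projective resolution in the category of `R`-modules. -/
noncomputable def projectiveResolution : ProjectiveResolution (ModuleCat.of R M) where
  complex := F.complex
  projective n := inferInstanceAs (Projective (ModuleCat.of R (Fin (F.rank n) → R)))
  π := F.augmentation
  quasiIso := ⟨fun n => by
    cases n with
    | zero => exact F.quasiIsoAt_zero_augmentation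
    | succ n =>
      rw [quasiIsoAt_iff_exactAt' _ _ (ChainComplex.exactAt_succ_single_obj _ _)]
      exact F.complex_exactAt_succ n⟩

end ProjectiveResolution

section Minimal

variable {k : Type*} {R M N : Type u} [Field k] [Ring R] [Algebra k R]
  [AddCommGroup M] [Module R M] [AddCommGroup N] [Module R N]

/-- Minimality relative to a coefficient module `N`: the entries of all differentials kill `N`. For
`N` the residue field of an augmented algebra this is the usual notion of a minimal resolution. -/
def IsMinimal (F : FreeResolution R M) (N : Type*) [AddCommGroup N] [Module R N] : Prop :=
  ∀ n v i, F.d n v i ∈ Module.annihilator R N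

lemma map_eq_zero_of_forall_mem_annihilator {ι : Type*} [Finite ι] (f : (ι → R) →ₗ[R] N)
    {v : ι → R} (hv : ∀ i, v i ∈ Module.annihilator R N) : f v = 0 := by
  cases nonempty_fintype ι
  classical
  rw [pi_eq_sum_univ' v, map_sum]
  exact Finset.sum_eq_zero fun i _ => by
    rw [map_smul, Module.mem_annihilator.1 (hv i)]

lemma linearYonedaObj_d_eq_zero {F : FreeResolution R M} (hF : F.IsMinimal N) (i j : ℕ) :
    (F.complex.linearYonedaObj k (ModuleCat.of R N)).d i j = 0 := by
  by_cases hij : i + 1 = j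
  · subst hij
    ext f : 2
    change F.complex.d (i + 1) i ≫ f = 0
    rw [complex_d]
    ext v : 2
    exact map_eq_zero_of_forall_mem_annihilator f.hom (hF i v)
  · exact HomologicalComplex.shape _ _ _ hij

variable [Module k N] [IsScalarTower k R N]

/-- A map out of a finite free module is determined by the images of the standard basis. -/
noncomputable def homFreeEquiv (ι : Type) [Finite ι] :
    ((linearYoneda k (ModuleCat.{u} R)).obj (ModuleCat.of R N)).obj
      (Opposite.op (ModuleCat.of R (ι → R))) ≃ₗ[k] (ι → N) :=
  { toFun := fun f => ((Pi.basisFun R ι).constr k).symm f.hom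
    invFun := fun m => ModuleCat.ofHom ((Pi.basisFun R ι).constr k m)
    left_inv := fun f => ModuleCat.hom_ext (LinearEquiv.apply_symm_apply _ f.hom)
    right_inv := fun m => LinearEquiv.symm_apply_apply _ m
    map_add' := fun f g => map_add _ _ _
    map_smul' := fun c f => by
      rw [RingHom.id_apply, ← map_smul]
      congr 1
      ext v
      exact algebraMap_smul R c (f.hom v) }

/-- Since the differentials vanish after applying `Hom(-, N)`, the cochains are the cohomology. -/
noncomputable def extEquiv (F : FreeResolution R M) (hF : F.IsMinimal N) (n : ℕ) :
    ((Ext k (ModuleCat.{u} R) n).obj (Opposite.op (ModuleCat.of R M))).obj (ModuleCat.of R N)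
      ≃ₗ[k] (Fin (F.rank n) → N) :=
  let cochains := F.complex.linearYonedaObj k (ModuleCat.of R N)
  let homologyIso := (ShortComplex.HomologyData.ofZeros (cochains.sc n)
    (linearYonedaObj_d_eq_zero hF _ _) (linearYonedaObj_d_eq_zero hF _ _)).left.homologyIso
  (F.projectiveResolution.isoExt n (ModuleCat.of R N) ≪≫ homologyIso).toLinearEquiv ≪≫ₗ
    homFreeEquiv (Fin (F.rank n))

end Minimal

lemma extDim_eq_rank {R : Type} [Ring R] [Algebra ℂ R] (ε : R →ₐ[ℂ] ℂ) :
    letI : Module R ℂ := Module.compHom ℂ ε.toRingHom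
    ∀ (F : FreeResolution R ℂ), F.IsMinimal ℂ → ∀ n, extDim R ε n = F.rank n := by
  intro F hF n
  let _ : Module R ℂ := Module.compHom ℂ ε.toRingHom
  have : IsScalarTower ℂ R ℂ := ⟨fun a r c => by
    change ε (a • r) * c = a * (ε r * c)
    rw [map_smul, smul_eq_mul, mul_assoc]⟩
  exact (F.extEquiv hF n).finrank_eq.trans (by simp)

end FreeResolution

section ScaleVars

open MvPolynomial

variable {σ k : Type*} [CommRing k]

/-- The substitution `Xᵢ ↦ cᵢ Xᵢ` in a polynomial ring. -/
noncomputable def scaleVars (c : σ → k) : MvPolynomial σ k →ₐ[k] MvPolynomial σ k :=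
  aeval fun i => C (c i) * X i

@[simp]
lemma scaleVars_X (c : σ → k) (i : σ) : scaleVars c (X i) = C (c i) * X i :=
  aeval_X _ i

@[simp]
lemma scaleVars_scaleVars (c c' : σ → k) (p : MvPolynomial σ k) :
    scaleVars c (scaleVars c' p) = scaleVars (c * c') p := by
  have : (scaleVars c).comp (scaleVars c') = scaleVars (c * c') := by
    ext i : 1
    rw [AlgHom.comp_apply, scaleVars_X, map_mul, scaleVars_X, scaleVars_X, Pi.mul_apply, C_mul,
      ← algebraMap_eq, AlgHom.commutes]
    ring
  exact DFunLike.congr_fun this p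

lemma scaleVars_one (p : MvPolynomial σ k) : scaleVars 1 p = p := by
  have : scaleVars (1 : σ → k) = AlgHom.id k _ := by ext i : 1; simp
  exact DFunLike.congr_fun this p

lemma scaleVars_monomial (c : σ → k) (s : σ →₀ ℕ) (a : k) :
    scaleVars c (monomial s a) = monomial s ((s.prod fun i n => c i ^ n) * a) := by
  rw [scaleVars, aeval_monomial, monomial_eq (s := s), C_mul, algebraMap_eq, Finsupp.prod,
    Finsupp.prod, Finsupp.prod, map_prod, mul_comm (∏ i ∈ _, _), mul_assoc,
    ← Finset.prod_mul_distrib]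
  simp only [mul_pow, C_pow]

@[simp]
lemma pderiv_scaleVars (c : σ → k) (i : σ) (p : MvPolynomial σ k) :
    pderiv i (scaleVars c p) = C (c i) * scaleVars c (pderiv i p) := by
  classical
  induction p using MvPolynomial.induction_on with
  | C a => simp [← algebraMap_eq]
  | add p q hp hq => simp only [map_add, hp, hq, mul_add]
  | mul_X p j hp =>
    obtain rfl | hij := eq_or_ne j i
    · simp only [map_mul, scaleVars_X, pderiv_mul, hp, pderiv_C, pderiv_X_self, map_add,
        map_one]
      ring
    · simp only [map_mul, scaleVars_X, pderiv_mul, hp, pderiv_C, pderiv_X_of_ne hij, map_add,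
        map_zero]
      ring

end ScaleVars

section Commutation

variable {S : Type*} [Ring S] {x y z : S}

lemma semiconjBy_neg_of_anticommute (h : x * z + z * x = 0) : SemiconjBy x z (-z) := by
  rw [SemiconjBy, neg_mul, eq_neg_of_add_eq_zero_left h]

lemma mul_pow_of_anticommutator (hxy : x * y + y * x = z) (hyz : y * z + z * y = 0) (n : ℕ) :
    x * y ^ n = (-y) ^ n * x + n * (z * y ^ (n - 1)) := by
  induction n with
  | zero => simp
  | succ n ih =>
    have hzy : z * y ^ n = (-y) ^ n * z :=
      (semiconjBy_neg_of_anticommute (by rw [add_comm, hyz])).pow_right n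
    have hpow : n * (z * y ^ (n - 1)) * y = n * (z * y ^ n) := by
      cases n with
      | zero => simp
      | succ n => rw [Nat.add_sub_cancel, pow_succ]; simp only [mul_assoc]
    calc x * y ^ (n + 1)
      _ = (-y) ^ n * (x * y) + n * (z * y ^ (n - 1)) * y := by
        rw [pow_succ, ← mul_assoc, ih, add_mul, mul_assoc _ x]
      _ = (-y) ^ n * z - (-y) ^ n * (y * x) + n * (z * y ^ n) := by
        rw [eq_sub_of_add_eq hxy, mul_sub, hpow]
      _ = (-y) ^ (n + 1) * x + ((n + 1 : ℕ) : S) * (z * y ^ (n + 1 - 1)) := by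
        rw [← hzy, Nat.add_sub_cancel, pow_succ (-y)]
        push_cast
        noncomm_ring

end Commutation

/-- The color Heisenberg algebra; a type synonym for `RingQuot CRel`, so that its scalar action is
found only through the `Algebra` instance. -/
def ColorHeisenberg : Type := RingQuot CRel

namespace ColorHeisenberg

section Presentation

noncomputable instance : Ring ColorHeisenberg := inferInstanceAs (Ring (RingQuot CRel))

noncomputable instance : Algebra ℂ ColorHeisenberg := inferInstanceAs (Algebra ℂ (RingQuot CRel))

/-- The quotient map from the free algebra. -/
noncomputable def mk : FreeAlgebra ℂ (Fin 3) →ₐ[ℂ] ColorHeisenberg := RingQuot.mkAlgHom ℂ CRel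

/-- The generator `e₁`. -/
noncomputable def x : ColorHeisenberg := mk (ι ℂ 0)

/-- The generator `e₂`. -/
noncomputable def y : ColorHeisenberg := mk (ι ℂ 1)

/-- The generator `e₃`. -/
noncomputable def z : ColorHeisenberg := mk (ι ℂ 2)

lemma mk_eq_mk_of_rel {a b : FreeAlgebra ℂ (Fin 3)} (h : CRel a b) : mk a = mk b :=
  RingQuot.mkAlgHom_rel ℂ h

lemma x_mul_y_add_y_mul_x : x * y + y * x = z := by
  simpa using! mk_eq_mk_of_rel CRel.r12

lemma x_mul_z_add_z_mul_x : x * z + z * x = 0 := by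
  simpa using! mk_eq_mk_of_rel CRel.r13

lemma y_mul_z_add_z_mul_y : y * z + z * y = 0 := by
  simpa using! mk_eq_mk_of_rel CRel.r23

@[elab_as_elim]
lemma induction {P : ColorHeisenberg → Prop} (algebraMap : ∀ c, P (algebraMap ℂ _ c))
    (x : P x) (y : P y) (add : ∀ r s, P r → P s → P (r + s))
    (mul : ∀ r s, P r → P s → P (r * s)) (r : ColorHeisenberg) : P r := by
  obtain ⟨a, rfl⟩ : ∃ a, mk a = r := RingQuot.mkAlgHom_surjective ℂ CRel r
  induction a using FreeAlgebra.induction with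
  | grade0 c => rw [AlgHom.commutes]; exact algebraMap c
  | grade1 i =>
    fin_cases i
    · exact x
    · exact y
    · change P z
      rw [← x_mul_y_add_y_mul_x]
      exact add _ _ (mul _ _ x y) (mul _ _ y x)
  | add a b ha hb => rw [map_add]; exact add _ _ ha hb
  | mul a b ha hb => rw [map_mul]; exact mul _ _ ha hb

variable {B : Type*} [Ring B] [Algebra ℂ B] {X Y Z : B}

/-- The universal property: a triple satisfying the color Heisenberg relations is the image of
`(x, y, z)` under an algebra homomorphism. -/
noncomputable def lift (hXY : X * Y + Y * X = Z) (hXZ : X * Z + Z * X = 0)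
    (hYZ : Y * Z + Z * Y = 0) : ColorHeisenberg →ₐ[ℂ] B :=
  RingQuot.liftAlgHom ℂ ⟨FreeAlgebra.lift ℂ ![X, Y, Z], by
    rintro _ _ (_ | _ | _) <;> simp [hXY, hXZ, hYZ]⟩

variable (hXY : X * Y + Y * X = Z) (hXZ : X * Z + Z * X = 0) (hYZ : Y * Z + Z * Y = 0)

lemma lift_mk (a : FreeAlgebra ℂ (Fin 3)) :
    lift hXY hXZ hYZ (mk a) = FreeAlgebra.lift ℂ ![X, Y, Z] a :=
  RingQuot.liftAlgHom_mkAlgHom_apply ℂ _ _ a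

@[simp]
lemma lift_x : lift hXY hXZ hYZ x = X := by simp [x, lift_mk]

@[simp]
lemma lift_y : lift hXY hXZ hYZ y = Y := by simp [y, lift_mk]

@[simp]
lemma lift_z : lift hXY hXZ hYZ z = Z := by simp [z, lift_mk]

end Presentation

section PBW

open MvPolynomial

local notation "V" => MvPolynomial (Fin 3) ℂ

/-- Left multiplication by `x` on normally ordered monomials `zᵏ yʲ xⁱ`, which are encoded as
`X₀ⁱ X₁ʲ X₂ᵏ`: moving `x` past `zᵏ yʲ` costs a sign `(-1)^(j + k)` and a correction `∂/∂X₁`. -/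
noncomputable def actX : Module.End ℂ V :=
  LinearMap.mulLeft ℂ (X 0) ∘ₗ (scaleVars ![1, -1, -1]).toLinearMap +
    LinearMap.mulLeft ℂ (X 2) ∘ₗ (scaleVars ![1, 1, -1]).toLinearMap ∘ₗ (pderiv 1).toLinearMap

/-- Left multiplication by `y` on normally ordered monomials, see `actX`. -/
noncomputable def actY : Module.End ℂ V :=
  LinearMap.mulLeft ℂ (X 1) ∘ₗ (scaleVars ![1, 1, -1]).toLinearMap

/-- Left multiplication by `z` on normally ordered monomials, see `actX`. -/
noncomputable def actZ : Module.End ℂ V := LinearMap.mulLeft ℂ (X 2)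

lemma actX_apply (p : V) : actX p = X 0 * scaleVars ![1, -1, -1] p +
    X 2 * scaleVars ![1, 1, -1] (pderiv 1 p) := rfl

lemma actY_apply (p : V) : actY p = X 1 * scaleVars ![1, 1, -1] p := rfl

lemma actZ_apply (p : V) : actZ p = X 2 * p := rfl

lemma vec3_mul_vec3 (a b c a' b' c' : ℂ) :
    ![a, b, c] * ![a', b', c'] = ![a * a', b * b', c * c'] := by
  ext i; fin_cases i <;> rfl

lemma scaleVars_vec3_one (p : V) : scaleVars ![1, 1, 1] p = p := by
  have : ![1, 1, 1] = (1 : Fin 3 → ℂ) := by ext i; fin_cases i <;> rfl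
  rw [this, scaleVars_one]

lemma actX_mul_actY_add_actY_mul_actX : actX * actY + actY * actX = actZ := by
  refine LinearMap.ext fun p => ?_
  simp only [LinearMap.add_apply, Module.End.mul_apply, actX_apply, actY_apply, actZ_apply,
    map_add, map_mul, scaleVars_X, scaleVars_scaleVars, vec3_mul_vec3, scaleVars_vec3_one,
    pderiv_mul, pderiv_scaleVars, pderiv_X_self, Matrix.cons_val, C_neg, C_1, mul_one, one_mul,
    mul_neg, neg_neg]
  ring

lemma actX_mul_actZ_add_actZ_mul_actX : actX * actZ + actZ * actX = 0 := by
  refine LinearMap.ext fun p => ?_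
  simp only [LinearMap.add_apply, LinearMap.zero_apply, Module.End.mul_apply, actX_apply,
    actZ_apply, map_mul, scaleVars_X, pderiv_mul, pderiv_X_of_ne (show (2 : Fin 3) ≠ 1 by decide),
    Matrix.cons_val, C_neg, C_1, zero_mul, zero_add]
  ring

lemma actY_mul_actZ_add_actZ_mul_actY : actY * actZ + actZ * actY = 0 := by
  refine LinearMap.ext fun p => ?_
  simp only [LinearMap.add_apply, LinearMap.zero_apply, Module.End.mul_apply, actY_apply,
    actZ_apply, map_mul, scaleVars_X, Matrix.cons_val, C_neg, C_1]
  ring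

/-- The action of the color Heisenberg algebra on itself by left multiplication, transported to
polynomials by normal ordering. -/
noncomputable def rep : ColorHeisenberg →ₐ[ℂ] Module.End ℂ V :=
  lift actX_mul_actY_add_actY_mul_actX actX_mul_actZ_add_actZ_mul_actX
    actY_mul_actZ_add_actZ_mul_actY

lemma commute_rep {T : Module.End ℂ V} (hX : Commute actX T) (hY : Commute actY T)
    (r : ColorHeisenberg) : Commute (rep r) T := by
  induction r using induction with
  | algebraMap c => rw [AlgHom.commutes]; exact Algebra.commute_algebraMap_left c T
  | x => rwa [rep, lift_x]
  | y => rwa [rep, lift_y]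
  | add r s hr hs => rw [map_add]; exact hr.add_left hs
  | mul r s hr hs => rw [map_mul]; exact hr.mul_left hs

lemma rep_X_zero_mul (r : ColorHeisenberg) (p : V) : rep r (X 0 * p) = X 0 * rep r p := by
  refine LinearMap.congr_fun (commute_rep (T := LinearMap.mulLeft ℂ (X 0)) ?_ ?_ r).eq p <;>
    refine LinearMap.ext fun q => ?_
  · simp only [Module.End.mul_apply, LinearMap.mulLeft_apply, actX_apply, map_mul, scaleVars_X,
      pderiv_mul, pderiv_X_of_ne (show (0 : Fin 3) ≠ 1 by decide), Matrix.cons_val, C_1, zero_mul,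
      zero_add]
    ring
  · simp only [Module.End.mul_apply, LinearMap.mulLeft_apply, actY_apply, map_mul, scaleVars_X,
      Matrix.cons_val, C_1]
    ring

lemma rep_X_two_mul_scaleVars (r : ColorHeisenberg) (p : V) :
    rep r (X 2 * scaleVars ![-1, -1, 1] p) = X 2 * scaleVars ![-1, -1, 1] (rep r p) := by
  refine LinearMap.congr_fun (commute_rep (T := LinearMap.mulLeft ℂ (X 2) ∘ₗ
    (scaleVars ![-1, -1, 1]).toLinearMap) ?_ ?_ r).eq p <;>
    refine LinearMap.ext fun q => ?_
  · simp only [Module.End.mul_apply, LinearMap.comp_apply, AlgHom.toLinearMap_apply,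
      LinearMap.mulLeft_apply, actX_apply, map_add, map_mul, map_neg, scaleVars_X,
      scaleVars_scaleVars, vec3_mul_vec3, pderiv_mul, pderiv_scaleVars,
      pderiv_X_of_ne (show (2 : Fin 3) ≠ 1 by decide), Matrix.cons_val, C_1, zero_mul,
      zero_add, mul_one, one_mul, mul_neg, neg_mul, neg_neg]
    ring
  · simp only [Module.End.mul_apply, LinearMap.comp_apply, AlgHom.toLinearMap_apply,
      LinearMap.mulLeft_apply, actY_apply, map_mul, scaleVars_X, scaleVars_scaleVars, vec3_mul_vec3,
      Matrix.cons_val, C_neg, C_1, mul_one, mul_neg]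
    ring

/-- Replaces `X₀ⁱ X₁ʲ X₂ᵏ` by the normally ordered monomial `zᵏ yʲ xⁱ`. -/
noncomputable def normalOrder : V →ₗ[ℂ] ColorHeisenberg :=
  (basisMonomials (Fin 3) ℂ).constr ℂ fun s => z ^ s 2 * y ^ s 1 * x ^ s 0

lemma normalOrder_monomial (s : Fin 3 →₀ ℕ) (c : ℂ) :
    normalOrder (monomial s c) = c • (z ^ s 2 * y ^ s 1 * x ^ s 0) := by
  rw [← mul_one c, ← smul_eq_mul, ← smul_monomial, map_smul, smul_eq_mul, mul_one]
  exact congrArg _ ((basisMonomials (Fin 3) ℂ).constr_basis ℂ _ s)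

lemma normalOrder_X_zero_mul (p : V) : normalOrder (X 0 * p) = normalOrder p * x := by
  suffices normalOrder ∘ₗ LinearMap.mulLeft ℂ (X 0) = LinearMap.mulRight ℂ x ∘ₗ normalOrder from
    LinearMap.congr_fun this p
  refine (basisMonomials (Fin 3) ℂ).ext fun s => ?_
  simp [X, monomial_mul, normalOrder_monomial, add_comm (1 : ℕ), pow_succ, mul_assoc]

lemma normalOrder_X_two_mul (p : V) : normalOrder (X 2 * p) = z * normalOrder p := by
  suffices normalOrder ∘ₗ LinearMap.mulLeft ℂ (X 2) = LinearMap.mulLeft ℂ z ∘ₗ normalOrder from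
    LinearMap.congr_fun this p
  refine (basisMonomials (Fin 3) ℂ).ext fun s => ?_
  simp [X, monomial_mul, normalOrder_monomial, pow_add, mul_assoc]

lemma normalOrder_scaleVars_monomial (a b c : ℂ) (s : Fin 3 →₀ ℕ) :
    normalOrder (scaleVars ![a, b, c] (monomial s 1)) =
      (c • z) ^ s 2 * (b • y) ^ s 1 * (a • x) ^ s 0 := by
  rw [scaleVars_monomial, normalOrder_monomial, Finsupp.prod_fintype _ _ (by simp),
    Fin.prod_univ_three, smul_pow, smul_pow, smul_pow]
  simp only [Matrix.cons_val, mul_one, smul_mul_assoc, mul_smul_comm, smul_smul]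
  rw [mul_assoc (a ^ s 0)]

lemma normalOrder_scaleVars_pderiv_monomial (a b c : ℂ) (s : Fin 3 →₀ ℕ) :
    normalOrder (scaleVars ![a, b, c] (pderiv 1 (monomial s 1))) =
      s 1 * ((c • z) ^ s 2 * (b • y) ^ (s 1 - 1) * (a • x) ^ s 0) := by
  have hderiv : pderiv 1 (monomial s (1 : ℂ)) = s 1 • monomial (s - Finsupp.single 1 1) 1 := by
    rw [pderiv_monomial, smul_monomial, one_mul, nsmul_one]
  rw [hderiv, map_nsmul, map_nsmul, normalOrder_scaleVars_monomial, nsmul_eq_mul]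
  simp

lemma normalOrder_actX (p : V) : normalOrder (actX p) = x * normalOrder p := by
  suffices normalOrder ∘ₗ actX = LinearMap.mulLeft ℂ x ∘ₗ normalOrder from
    LinearMap.congr_fun this p
  refine (basisMonomials (Fin 3) ℂ).ext fun s => ?_
  have hxz : x * z ^ s 2 = (-z) ^ s 2 * x :=
    (semiconjBy_neg_of_anticommute x_mul_z_add_z_mul_x).pow_right (s 2)
  have hxy := mul_pow_of_anticommutator x_mul_y_add_y_mul_x y_mul_z_add_z_mul_y (s 1)
  have hz : (-z) ^ s 2 * z = z * (-z) ^ s 2 := ((Commute.refl z).neg_left.pow_left (s 2)).eq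
  rw [coe_basisMonomials, LinearMap.comp_apply, LinearMap.comp_apply, actX_apply, map_add,
    normalOrder_X_zero_mul, normalOrder_X_two_mul, normalOrder_scaleVars_monomial,
    normalOrder_scaleVars_pderiv_monomial, LinearMap.mulLeft_apply, normalOrder_monomial]
  simp only [neg_smul, one_smul]
  calc (-z) ^ s 2 * (-y) ^ s 1 * x ^ s 0 * x +
        z * (s 1 * ((-z) ^ s 2 * y ^ (s 1 - 1) * x ^ s 0))
    _ = (-z) ^ s 2 * ((-y) ^ s 1 * x) * x ^ s 0 +
        s 1 * (z * (-z) ^ s 2 * y ^ (s 1 - 1) * x ^ s 0) := by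
      rw [mul_assoc _ (x ^ s 0), pow_mul_comm', Nat.cast_comm]
      simp only [mul_assoc, Nat.cast_comm]
    _ = (-z) ^ s 2 * (x * y ^ s 1) * x ^ s 0 := by
      rw [← hz, hxy, mul_add, add_mul, ← mul_assoc _ (s 1 : ColorHeisenberg), ← Nat.cast_comm]
      simp only [mul_assoc]
    _ = x * (z ^ s 2 * y ^ s 1 * x ^ s 0) := by
      rw [← mul_assoc, ← hxz]
      simp only [mul_assoc]

lemma normalOrder_actY (p : V) : normalOrder (actY p) = y * normalOrder p := by
  suffices normalOrder ∘ₗ actY = LinearMap.mulLeft ℂ y ∘ₗ normalOrder from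
    LinearMap.congr_fun this p
  refine (basisMonomials (Fin 3) ℂ).ext fun s => ?_
  have hyz : y * z ^ s 2 = (-z) ^ s 2 * y :=
    (semiconjBy_neg_of_anticommute y_mul_z_add_z_mul_y).pow_right (s 2)
  have hactY : actY (monomial s 1) =
      scaleVars ![1, 1, -1] (monomial (Finsupp.single 1 1 + s) 1) := by
    have hmonomial : monomial (Finsupp.single 1 1 + s) (1 : ℂ) = X 1 * monomial s 1 := by
      rw [X, monomial_mul, one_mul]
    rw [hmonomial, map_mul, scaleVars_X, actY_apply]
    simp
  rw [coe_basisMonomials, LinearMap.comp_apply, LinearMap.comp_apply, hactY,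
    normalOrder_scaleVars_monomial, LinearMap.mulLeft_apply, normalOrder_monomial,
    neg_smul, one_smul, one_smul, one_smul, one_smul, ← mul_assoc, ← mul_assoc, hyz]
  simp [pow_add, mul_assoc]

lemma normalOrder_rep (r : ColorHeisenberg) (p : V) :
    normalOrder (rep r p) = r * normalOrder p := by
  induction r using induction generalizing p with
  | algebraMap c =>
    rw [AlgHom.commutes, Module.algebraMap_end_apply, map_smul, Algebra.smul_def]
  | x => rw [rep, lift_x, normalOrder_actX]
  | y => rw [rep, lift_y, normalOrder_actY]
  | add r s hr hs => rw [map_add, LinearMap.add_apply, map_add, hr, hs, add_mul]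
  | mul r s hr hs => rw [map_mul, Module.End.mul_apply, hr, hs, mul_assoc]

/-- The polynomial whose normal ordering is `r`. -/
noncomputable def symbol (r : ColorHeisenberg) : V := rep r 1

lemma normalOrder_symbol (r : ColorHeisenberg) : normalOrder (symbol r) = r := by
  have h1 : normalOrder 1 = 1 := by
    simpa using normalOrder_monomial 0 1
  rw [symbol, normalOrder_rep, h1, mul_one]

lemma symbol_mul_x (r : ColorHeisenberg) : symbol (r * x) = X 0 * symbol r := by
  have hx : rep x 1 = X 0 * 1 := by simp [rep, actX_apply]
  rw [symbol, map_mul, Module.End.mul_apply, hx, rep_X_zero_mul, symbol]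

lemma symbol_mul_z (r : ColorHeisenberg) :
    symbol (r * z) = X 2 * scaleVars ![-1, -1, 1] (symbol r) := by
  have hz : rep z 1 = X 2 * scaleVars ![-1, -1, 1] 1 := by simp [rep, actZ_apply]
  rw [symbol, map_mul, Module.End.mul_apply, hz, rep_X_two_mul_scaleVars, symbol]

lemma isRightRegular_x : IsRightRegular x := by
  intro r s hrs
  have h : X 0 * symbol r = X 0 * symbol s := by
    rw [← symbol_mul_x, ← symbol_mul_x]
    exact congrArg symbol hrs
  rw [← normalOrder_symbol r, mul_left_cancel₀ (X_ne_zero 0) h, normalOrder_symbol]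

lemma exists_eq_mul_x_of_mul_z_eq_mul_x {b u : ColorHeisenberg} (h : b * z = u * x) :
    ∃ c, b = c * x := by
  have hdvd : (X 0 : V) ∣ X 2 * scaleVars ![-1, -1, 1] (symbol b) :=
    ⟨symbol u, by rw [← symbol_mul_z, h, symbol_mul_x]⟩
  obtain ⟨q, hq⟩ := ((X_prime (R := ℂ) (i := (0 : Fin 3))).dvd_or_dvd hdvd).resolve_left
    (by simp [X_dvd_X])
  have hb : symbol b = X 0 * -scaleVars ![-1, -1, 1] q := by
    have := congrArg (scaleVars ![-1, -1, 1]) hq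
    simpa [vec3_mul_vec3, scaleVars_vec3_one] using this
  exact ⟨normalOrder (-scaleVars ![-1, -1, 1] q), by
    rw [← normalOrder_X_zero_mul, ← hb, normalOrder_symbol]⟩

end PBW

section Syzygies

lemma exists_eq_mul_y_and_eq_mul_x {a b : ColorHeisenberg}
    (h : a * (x * x) + b * (y * x + z) = 0) : ∃ c, a = c * y ∧ b = c * x := by
  have hbz : b * z = (-(a * x) - b * y) * x := by
    rw [← sub_eq_zero, ← h]
    noncomm_ring
  obtain ⟨c, rfl⟩ := exists_eq_mul_x_of_mul_z_eq_mul_x hbz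
  have hxyx : x * (y * x + z) = -(y * (x * x)) := by
    rw [← sub_eq_zero, ← x_mul_z_add_z_mul_x, ← x_mul_y_add_y_mul_x]
    noncomm_ring
  have hcancel : a * x * x = c * y * x * x := by
    rw [mul_assoc c, hxyx] at h
    rw [← sub_eq_zero, ← h]
    noncomm_ring
  exact ⟨c, isRightRegular_x (isRightRegular_x hcancel), rfl⟩

variable (ε : ColorHeisenberg →ₐ[ℂ] ℂ)

/-- The right action through the augmentation, for which a derivation is a Fox derivation. -/
noncomputable abbrev augmentationRightModule (M : Type*) [AddCommGroup M] [Module ℂ M] :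
    Module ColorHeisenbergᵐᵒᵖ M :=
  Module.compHom M (ε.toRingHom.fromOpposite fun _ _ => Commute.all _ _)

variable {ε} {M : Type*} [AddCommGroup M] [Module ColorHeisenberg M] [Module ℂ M]
  [IsScalarTower ℂ ColorHeisenberg M] {m n : M}

-- A derivation is a section of the square-zero extension by `M`, and such a section is built from
-- the universal property.
open TrivSqZeroExt in
lemma exists_foxDerivation (hx : ε x = 0) (hy : ε y = 0)
    (hxz : x • (x • n + y • m) + z • m = 0) (hyz : y • (x • n + y • m) + z • n = 0) :
    ∃ D : ColorHeisenberg →+ M, D x = m ∧ D y = n ∧ ∀ r s, D (r * s) = r • D s + ε s • D r := by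
  let _ := augmentationRightModule ε M
  have op_smul (r : ColorHeisenberg) (k : M) : MulOpposite.op r • k = ε r • k := rfl
  have : SMulCommClass ColorHeisenberg ColorHeisenbergᵐᵒᵖ M :=
    ⟨fun r s k => smul_comm r (ε s.unop) k⟩
  have : IsScalarTower ℂ ColorHeisenbergᵐᵒᵖ M := ⟨fun c s k => by
    change ε (c • s.unop) • k = c • ε s.unop • k
    rw [map_smul, smul_assoc]⟩
  have hz : ε z = 0 := by simp [← x_mul_y_add_y_mul_x, hx, hy]
  let X : TrivSqZeroExt ColorHeisenberg M := inl x + inr m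
  let Y : TrivSqZeroExt ColorHeisenberg M := inl y + inr n
  let Z : TrivSqZeroExt ColorHeisenberg M := inl z + inr (x • n + y • m)
  have hXY : X * Y + Y * X = Z := by
    ext <;> simp [X, Y, Z, op_smul, hx, hy, x_mul_y_add_y_mul_x]
  have hXZ : X * Z + Z * X = 0 := by
    ext
    · simp [X, Z, x_mul_z_add_z_mul_x]
    · simpa [X, Z, op_smul, hx, hz] using hxz
  have hYZ : Y * Z + Z * Y = 0 := by
    ext
    · simp [Y, Z, y_mul_z_add_z_mul_y]
    · simpa [Y, Z, op_smul, hy, hz] using hyz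
  let f := lift hXY hXZ hYZ
  have hfst (r) : (f r).fst = r := by
    induction r using induction with
    | algebraMap c => rw [AlgHom.commutes]; rfl
    | x => simp [f, X]
    | y => simp [f, Y]
    | add r s hr hs => rw [map_add, fst_add, hr, hs]
    | mul r s hr hs => rw [map_mul, fst_mul, hr, hs]
  exact ⟨(sndHom ColorHeisenberg M).toAddMonoidHom.comp f.toRingHom.toAddMonoidHom,
    by simp [f, X], by simp [f, Y], fun r s => by simp [snd_mul, hfst, op_smul]⟩

lemma smul_add_smul_eq_zero_of_mul_add_mul_eq_zero (hx : ε x = 0) (hy : ε y = 0)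
    (hxz : (x * y + z) • m + (x * x) • n = 0) (hyz : (y * y) • m + (y * x + z) • n = 0)
    {a b : ColorHeisenberg} (hab : a * x + b * y = 0) : a • m + b • n = 0 := by
  obtain ⟨D, hDx, hDy, hD⟩ := exists_foxDerivation (ε := ε) (m := m) (n := n) hx hy
    (by rw [← hxz]; simp only [smul_add, add_smul, mul_smul]; abel)
    (by rw [← hyz]; simp only [smul_add, add_smul, mul_smul]; abel)
  calc a • m + b • n
    _ = D (a * x + b * y) := by rw [map_add, hD, hD, hDx, hDy, hx, hy]; simp
    _ = 0 := by rw [hab, map_zero]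

end Syzygies

section Resolution

open Matrix

lemma exact_vecMulLinear {S l m n : Type*} [Semiring S] [Fintype l] [Fintype m]
    {P : Matrix l m S} {Q : Matrix m n S} (hPQ : P * Q = 0)
    (hker : ∀ v, v ᵥ* Q = 0 → ∃ w, w ᵥ* P = v) :
    Function.Exact P.vecMulLinear Q.vecMulLinear := by
  refine fun v => ⟨hker v, ?_⟩
  rintro ⟨w, rfl⟩
  rw [vecMulLinear_apply, vecMulLinear_apply, vecMul_vecMul, hPQ, vecMul_zero]

/-- The map `R² → R` onto the augmentation ideal. -/
noncomputable def generatorMatrix : Matrix (Fin 2) (Fin 1) ColorHeisenberg :=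
  !![x; y]

/-- The Fox Jacobian of the relations `⟨x, z⟩ = 0` and `⟨y, z⟩ = 0` between `x` and `y`. -/
noncomputable def relationMatrix : Matrix (Fin 2) (Fin 2) ColorHeisenberg :=
  !![x * y + z, x * x; y * y, y * x + z]

/-- The syzygy between the two relations. -/
noncomputable def syzygyMatrix : Matrix (Fin 1) (Fin 2) ColorHeisenberg :=
  !![y, x]

lemma vecMul_generatorMatrix (v : Fin 2 → ColorHeisenberg) :
    v ᵥ* generatorMatrix = ![v 0 * x + v 1 * y] := by
  ext i; fin_cases i
  simp [generatorMatrix, vecMul, dotProduct]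

lemma vecMul_relationMatrix (v : Fin 2 → ColorHeisenberg) :
    v ᵥ* relationMatrix =
      ![v 0 * (x * y + z) + v 1 * (y * y), v 0 * (x * x) + v 1 * (y * x + z)] := by
  ext i; fin_cases i <;> simp [relationMatrix, vecMul, dotProduct]

lemma vecMul_syzygyMatrix (v : Fin 1 → ColorHeisenberg) :
    v ᵥ* syzygyMatrix = ![v 0 * y, v 0 * x] := by
  ext i; fin_cases i <;> simp [syzygyMatrix, vecMul, dotProduct]

lemma relationMatrix_mul_generatorMatrix : relationMatrix * generatorMatrix = 0 := by
  have hxz : (x * y + z) * x + x * x * y = 0 := by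
    rw [← x_mul_z_add_z_mul_x, ← x_mul_y_add_y_mul_x]; noncomm_ring
  have hyz : y * y * x + (y * x + z) * y = 0 := by
    rw [← y_mul_z_add_z_mul_y, ← x_mul_y_add_y_mul_x]; noncomm_ring
  ext i j; fin_cases i <;> fin_cases j <;>
    simp [relationMatrix, generatorMatrix, Matrix.mul_apply, hxz, hyz]

lemma syzygyMatrix_mul_relationMatrix : syzygyMatrix * relationMatrix = 0 := by
  have hyz : y * (x * y + z) + x * (y * y) = 0 := by
    rw [← y_mul_z_add_z_mul_y, ← x_mul_y_add_y_mul_x]; noncomm_ring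
  have hxz : y * (x * x) + x * (y * x + z) = 0 := by
    rw [← x_mul_z_add_z_mul_x, ← x_mul_y_add_y_mul_x]; noncomm_ring
  ext i j; fin_cases i; fin_cases j <;>
    simp [relationMatrix, syzygyMatrix, Matrix.mul_apply, hxz, hyz]

variable {ε : ColorHeisenberg →ₐ[ℂ] ℂ}

lemma sub_algebraMap_mem_span (hx : ε x = 0) (hy : ε y = 0) (r : ColorHeisenberg) :
    r - algebraMap ℂ _ (ε r) ∈ Submodule.span ColorHeisenberg {x, y} := by
  induction r using induction with
  | algebraMap c => simp
  | x => rw [hx, map_zero, sub_zero]; exact Submodule.subset_span (by simp)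
  | y => rw [hy, map_zero, sub_zero]; exact Submodule.subset_span (by simp)
  | add r s hr hs =>
    rw [map_add, map_add, add_sub_add_comm]
    exact add_mem hr hs
  | mul r s hr hs =>
    have hmul : r * s - algebraMap ℂ _ (ε (r * s)) = r • (s - algebraMap ℂ _ (ε s)) +
        algebraMap ℂ ColorHeisenberg (ε s) • (r - algebraMap ℂ _ (ε r)) := by
      rw [smul_eq_mul, smul_eq_mul, map_mul, map_mul, Algebra.commutes (ε s)]
      noncomm_ring
    rw [hmul]
    exact add_mem (Submodule.smul_mem _ r hs) (Submodule.smul_mem _ _ hr)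

lemma exact_generatorMatrix_augmentation (hx : ε x = 0) (hy : ε y = 0) :
    Function.Exact generatorMatrix.vecMulLinear fun v : Fin 1 → ColorHeisenberg => ε (v 0) := by
  refine fun v => ⟨fun (hv : ε (v 0) = 0) => ?_, ?_⟩
  · have hmem := sub_algebraMap_mem_span hx hy (v 0)
    rw [hv, map_zero, sub_zero, Submodule.mem_span_pair] at hmem
    obtain ⟨a, b, hab⟩ := hmem
    refine ⟨![a, b], ?_⟩
    rw [vecMulLinear_apply, vecMul_generatorMatrix]
    ext i; fin_cases i
    exact hab
  · rintro ⟨w, rfl⟩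
    simp [vecMul_generatorMatrix, hx, hy]

lemma map_generatorMatrix (hx : ε x = 0) (hy : ε y = 0) : generatorMatrix.map ε = 0 := by
  ext i j; fin_cases i <;> fin_cases j <;> simp [generatorMatrix, hx, hy]

lemma map_relationMatrix (hx : ε x = 0) (hy : ε y = 0) : relationMatrix.map ε = 0 := by
  ext i j; fin_cases i <;> fin_cases j <;>
    simp [relationMatrix, ← x_mul_y_add_y_mul_x, hx, hy]

lemma map_syzygyMatrix (hx : ε x = 0) (hy : ε y = 0) : syzygyMatrix.map ε = 0 := by
  ext i j; fin_cases i; fin_cases j <;> simp [syzygyMatrix, hx, hy]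

lemma exact_relationMatrix_generatorMatrix (hx : ε x = 0) (hy : ε y = 0) :
    Function.Exact relationMatrix.vecMulLinear generatorMatrix.vecMulLinear := by
  refine exact_vecMulLinear relationMatrix_mul_generatorMatrix fun v hv => ?_
  let N := LinearMap.range relationMatrix.vecMulLinear
  have hN (a b : ColorHeisenberg) :
      a • N.mkQ ![1, 0] + b • N.mkQ ![0, 1] = 0 ↔ ∃ w, w ᵥ* relationMatrix = ![a, b] := by
    rw [← map_smul, ← map_smul, ← map_add, Submodule.mkQ_apply, Submodule.Quotient.mk_eq_zero]
    simp [N]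
  have hv0 : v 0 * x + v 1 * y = 0 := by
    rw [vecMul_generatorMatrix] at hv
    exact congrFun hv 0
  obtain ⟨w, hw⟩ := (hN _ _).1 (smul_add_smul_eq_zero_of_mul_add_mul_eq_zero hx hy
    ((hN _ _).2 ⟨![1, 0], by simp [vecMul_relationMatrix]⟩)
    ((hN _ _).2 ⟨![0, 1], by simp [vecMul_relationMatrix]⟩) hv0)
  exact ⟨w, hw.trans (by ext i; fin_cases i <;> rfl)⟩

lemma exact_syzygyMatrix_relationMatrix :
    Function.Exact syzygyMatrix.vecMulLinear relationMatrix.vecMulLinear := by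
  refine exact_vecMulLinear syzygyMatrix_mul_relationMatrix fun v hv => ?_
  rw [vecMul_relationMatrix] at hv
  obtain ⟨c, hc0, hc1⟩ := exists_eq_mul_y_and_eq_mul_x (congrFun hv 1)
  refine ⟨![c], ?_⟩
  rw [vecMul_syzygyMatrix]
  ext i; fin_cases i <;> simp [hc0, hc1]

lemma injective_syzygyMatrix : Function.Injective syzygyMatrix.vecMulLinear := by
  intro v w hvw
  rw [vecMulLinear_apply, vecMulLinear_apply, vecMul_syzygyMatrix, vecMul_syzygyMatrix] at hvw
  ext i; fin_cases i
  exact isRightRegular_x (congrFun hvw 1)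

/-- The ranks of the minimal free resolution of the trivial module. -/
def betti : ℕ → ℕ
  | 0 => 1
  | 1 => 2
  | 2 => 2
  | 3 => 1
  | _ + 4 => 0

/-- The differentials of the minimal free resolution, acting on row vectors. -/
noncomputable def differential : ∀ n, Matrix (Fin (betti (n + 1))) (Fin (betti n)) ColorHeisenberg
  | 0 => generatorMatrix
  | 1 => relationMatrix
  | 2 => syzygyMatrix
  | _ + 3 => 0

lemma exact_differential (hx : ε x = 0) (hy : ε y = 0) :
    ∀ n, Function.Exact (differential (n + 1)).vecMulLinear (differential n).vecMulLinear
  | 0 => exact_relationMatrix_generatorMatrix hx hy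
  | 1 => exact_syzygyMatrix_relationMatrix
  | 2 => (LinearMap.exact_zero_iff_injective (Fin 0 → ColorHeisenberg) _).2 injective_syzygyMatrix
  | _ + 3 => fun v => ⟨fun _ => ⟨0, Subsingleton.elim (α := Fin 0 → ColorHeisenberg) _ _⟩,
      fun _ => vecMul_zero v⟩

lemma map_differential (hx : ε x = 0) (hy : ε y = 0) : ∀ n, (differential n).map ε = 0
  | 0 => map_generatorMatrix hx hy
  | 1 => map_relationMatrix hx hy
  | 2 => map_syzygyMatrix hx hy
  | _ + 3 => Matrix.map_zero ε (map_zero ε)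

lemma map_vecMul_differential (hx : ε x = 0) (hy : ε y = 0) (n : ℕ)
    (v : Fin (betti (n + 1)) → ColorHeisenberg) (i : Fin (betti n)) :
    ε ((v ᵥ* differential n) i) = 0 := by
  have h := RingHom.map_vecMul ε.toRingHom (differential n) v i
  rwa [show (differential n).map ε.toRingHom = 0 from map_differential hx hy n, vecMul_zero] at h

/-- The minimal free resolution `0 → R → R² → R² → R → ℂ → 0`. -/
noncomputable def resolution (hx : ε x = 0) (hy : ε y = 0) :
    letI : Module ColorHeisenberg ℂ := Module.compHom ℂ ε.toRingHom
    FreeResolution ColorHeisenberg ℂ :=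
  letI : Module ColorHeisenberg ℂ := Module.compHom ℂ ε.toRingHom
  { rank := betti
    d := fun n => (differential n).vecMulLinear
    π := LinearMap.toSpanSingleton ColorHeisenberg ℂ 1 ∘ₗ LinearMap.proj (0 : Fin 1)
    exact := exact_differential hx hy
    exact_π := fun v : Fin 1 → ColorHeisenberg =>
      (Eq.congr_left (mul_one (ε (v 0)))).trans (exact_generatorMatrix_augmentation hx hy v)
    surjective_π := fun c =>
      ⟨fun _ => algebraMap ℂ _ c, (mul_one _).trans (AlgHom.commutes ε c)⟩ }

lemma isMinimal_resolution (hx : ε x = 0) (hy : ε y = 0) :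
    letI : Module ColorHeisenberg ℂ := Module.compHom ℂ ε.toRingHom
    (resolution hx hy).IsMinimal ℂ := by
  let _ : Module ColorHeisenberg ℂ := Module.compHom ℂ ε.toRingHom
  intro n v i
  exact Module.mem_annihilator.2 fun c =>
    mul_eq_zero_of_left (map_vecMul_differential hx hy n v i) c

lemma extDim_eq_betti (hx : ε x = 0) (hy : ε y = 0) (n : ℕ) :
    extDim ColorHeisenberg ε n = betti n :=
  FreeResolution.extDim_eq_rank ε (resolution hx hy) (isMinimal_resolution hx hy) n

end Resolution

end ColorHeisenberg

theorem betti_numbers (ε : RingQuot CRel →ₐ[ℂ] ℂ)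
    (hε : ∀ i : Fin 3, ε (RingQuot.mkAlgHom ℂ CRel (ι ℂ i)) = 0) :
    extDim (RingQuot CRel) ε 0 = 1 ∧ extDim (RingQuot CRel) ε 1 = 2 ∧
    extDim (RingQuot CRel) ε 2 = 2 ∧ extDim (RingQuot CRel) ε 3 = 1 ∧
    ∀ n ≥ 4, extDim (RingQuot CRel) ε n = 0 := by
  have h (n : ℕ) : extDim (RingQuot CRel) ε n = ColorHeisenberg.betti n :=
    ColorHeisenberg.extDim_eq_betti (hε 0) (hε 1) n
  refine ⟨h 0, h 1, h 2, h 3, fun n hn => ?_⟩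
  obtain ⟨m, rfl⟩ := Nat.exists_eq_add_of_le' hn
  exact h (m + 4)
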